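/- Let Ω ⊂ ℝ² be a bounded C² domain, u a C³ solution of −Δu = ρ²(e^u − e^{-u}) in Ω, and v a C² solution of −Δv = μρ²(e^u + e^{-u})v in Ω. Then for any smooth subdomain Ω′ with closure contained in Ω and any j ∈ {1,2}: (1 − μ) ρ² ∫_{Ω′} (e^{u(x)} + e^{-u(x)}) (∂u/∂x_j)(x) v(x) dx = ∫_{∂Ω′} [ (∂v/∂ν)(x)(∂u/∂x_j)(x) − v(x)(∂²u/∂ν∂x_j)(x) ] dσ(x), where ν is the outward unit normal to ∂Ω′. -/

import Mathlib

open MeasureTheory Real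

/-- Laplacian on ℝ² via second partial derivatives. -/
noncomputable def lap (f : ℝ × ℝ → ℝ) (p : ℝ × ℝ) : ℝ :=
  deriv (deriv (fun s => f (s, p.2))) p.1 + deriv (deriv (fun s => f (p.1, s))) p.2

/-- Partial derivative in the j-th coordinate direction on ℝ². -/
noncomputable def pd (j : Fin 2) (f : ℝ × ℝ → ℝ) (p : ℝ × ℝ) : ℝ :=
  if j = 0 then deriv (fun s => f (s, p.2)) p.1 else deriv (fun s => f (p.1, s)) p.2

/-- Outward-normal derivative associated to a normal field ν. -/
noncomputable def nder (ν : ℝ × ℝ → ℝ × ℝ) (f : ℝ × ℝ → ℝ) (x : ℝ × ℝ) : ℝ :=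
  (ν x).1 * pd 0 f x + (ν x).2 * pd 1 f x

/-!
Differentiating `-Δu = c φ(u)` along a constant vector `w` shows that `∂_w u` solves the linearized
equation `-Δ(∂_w u) = c φ'(u) ∂_w u`. The eigenfunction `v` solves the same equation with an extra
factor `μ`, so `(1 - μ) c φ'(u) ∂_w u v = Δv ∂_w u - v Δ(∂_w u)`, and Green's second identity turns
the integral of the right-hand side into the boundary term.
-/

open Filter Topology

section DirectionalDerivatives

variable {𝕜 : Type*} [NontriviallyNormedField 𝕜] {E : Type*} [NormedAddCommGroup E]
  [NormedSpace 𝕜 E] {F : Type*} [NormedAddCommGroup F] [NormedSpace 𝕜 F]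
  {m n : WithTop ℕ∞} {f : E → F} {x : E}

theorem eventuallyEq_lineDeriv_fderiv (hf : ContDiffAt 𝕜 n f x) (hn : 1 ≤ n) (w : E) :
    (fun y ↦ lineDeriv 𝕜 f y w) =ᶠ[𝓝 x] fun y ↦ fderiv 𝕜 f y w := by
  filter_upwards [(hf.of_le hn).eventually (by simp)] with y hy
  exact (hy.differentiableAt one_ne_zero).lineDeriv_eq_fderiv

theorem contDiffAt_lineDeriv (hf : ContDiffAt 𝕜 n f x) (hmn : m + 1 ≤ n) (w : E) :
    ContDiffAt 𝕜 m (fun y ↦ lineDeriv 𝕜 f y w) x :=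
  ((hf.fderiv_right hmn).clm_apply contDiffAt_const).congr_of_eventuallyEq
    (eventuallyEq_lineDeriv_fderiv hf (le_add_self.trans hmn) w)

theorem lineDeriv_lineDeriv_eq_fderiv_fderiv (hf : ContDiffAt 𝕜 2 f x) (w w' : E) :
    lineDeriv 𝕜 (fun y ↦ lineDeriv 𝕜 f y w) x w' = fderiv 𝕜 (fderiv 𝕜 f) x w' w := by
  have hD : DifferentiableAt 𝕜 (fderiv 𝕜 f) x :=
    (hf.fderiv_right (m := 1) (by norm_num)).differentiableAt one_ne_zero
  rw [(eventuallyEq_lineDeriv_fderiv hf one_le_two w).lineDeriv_eq,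
    ((hD.hasFDerivAt.clm_apply (hasFDerivAt_const w x)).hasLineDerivAt w').lineDeriv]
  simp

theorem lineDeriv_comm [IsRCLikeNormedField 𝕜] (hf : ContDiffAt 𝕜 2 f x) (w w' : E) :
    lineDeriv 𝕜 (fun y ↦ lineDeriv 𝕜 f y w) x w' =
      lineDeriv 𝕜 (fun y ↦ lineDeriv 𝕜 f y w') x w := by
  rw [lineDeriv_lineDeriv_eq_fderiv_fderiv hf, lineDeriv_lineDeriv_eq_fderiv_fderiv hf]
  exact (hf.isSymmSndFDerivAt (by simp)).eq w' w

theorem lineDeriv_fun_sum {ι : Type*} {s : Finset ι} {g : ι → E → F}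
    (hg : ∀ i ∈ s, DifferentiableAt 𝕜 (g i) x) (w : E) :
    lineDeriv 𝕜 (fun y ↦ ∑ i ∈ s, g i y) x w = ∑ i ∈ s, lineDeriv 𝕜 (g i) x w := by
  rw [((HasFDerivAt.fun_sum fun i hi ↦ (hg i hi).hasFDerivAt).hasLineDerivAt w).lineDeriv,
    sum_apply]
  exact Finset.sum_congr rfl fun i hi ↦ (hg i hi).lineDeriv_eq_fderiv.symm

theorem lineDeriv_const_mul_comp {c φ' : 𝕜} {φ : 𝕜 → 𝕜} {u : E → 𝕜} (hφ : HasDerivAt φ φ' (u x))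
    (hu : DifferentiableAt 𝕜 u x) (w : E) :
    lineDeriv 𝕜 (fun y ↦ c * φ (u y)) x w = c * φ' * lineDeriv 𝕜 u x w := by
  refine (((hφ.comp_hasFDerivAt x hu.hasFDerivAt).const_mul c).hasLineDerivAt w).lineDeriv.trans ?_
  simp [hu.lineDeriv_eq_fderiv, mul_assoc]

end DirectionalDerivatives

section Laplacian

variable (𝕜 : Type*) [NontriviallyNormedField 𝕜] {E : Type*} [NormedAddCommGroup E]
  [NormedSpace 𝕜 E] {F : Type*} [NormedAddCommGroup F] [NormedSpace 𝕜 F]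
  {ι : Type*} (e : ι → E) {x : E}

/-- The Laplacian `∑ i, ∂_{e i}² f` attached to a finite family of directions `e`. No inner product
is required, so that the family of coordinate vectors of `ℝ × ℝ` is covered. -/
noncomputable def lineLaplacian [Fintype ι] (f : E → F) (x : E) : F :=
  ∑ i, lineDeriv 𝕜 (fun y ↦ lineDeriv 𝕜 f y (e i)) x (e i)

/-- The derivative `∑ i, ν i ∂_{e i} f` along a vector field `ν` given by its components; the normal
derivative `∂f/∂ν` when `ν` is a normal field. -/
noncomputable def fieldDeriv [Fintype ι] (ν : E → ι → 𝕜) (f : E → 𝕜) (x : E) : 𝕜 :=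
  ∑ i, ν x i * lineDeriv 𝕜 f x (e i)

/-- The flux field `(∂_i v) w - v ∂_i w` of Green's second identity, in the direction `e i`. -/
noncomputable def greenFlux (v w : E → 𝕜) (i : ι) (x : E) : 𝕜 :=
  lineDeriv 𝕜 v x (e i) * w x - v x * lineDeriv 𝕜 w x (e i)

variable {𝕜}

theorem lineLaplacian_lineDeriv [Fintype ι] [IsRCLikeNormedField 𝕜] {f : E → F}
    (hf : ContDiffAt 𝕜 3 f x) (w : E) :
    lineLaplacian 𝕜 e (fun y ↦ lineDeriv 𝕜 f y w) x =
      lineDeriv 𝕜 (lineLaplacian 𝕜 e f) x w := by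
  have hf₁ (i : ι) : ContDiffAt 𝕜 2 (fun y ↦ lineDeriv 𝕜 f y (e i)) x :=
    contDiffAt_lineDeriv hf (by norm_num) (e i)
  have hf₂ (i : ι) :
      DifferentiableAt 𝕜 (fun y ↦ lineDeriv 𝕜 (fun z ↦ lineDeriv 𝕜 f z (e i)) y (e i)) x :=
    (contDiffAt_lineDeriv (m := 1) (hf₁ i) (by norm_num) (e i)).differentiableAt one_ne_zero
  have hcomm (i : ι) : (fun y ↦ lineDeriv 𝕜 (fun z ↦ lineDeriv 𝕜 f z w) y (e i)) =ᶠ[𝓝 x]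
      fun y ↦ lineDeriv 𝕜 (fun z ↦ lineDeriv 𝕜 f z (e i)) y w := by
    filter_upwards [(hf.of_le (m := 2) (by norm_num)).eventually (by simp)] with y hy
    exact lineDeriv_comm hy w (e i)
  unfold lineLaplacian
  rw [lineDeriv_fun_sum fun i _ ↦ hf₂ i]
  refine Finset.sum_congr rfl fun i _ ↦ ?_
  rw [(hcomm i).lineDeriv_eq, lineDeriv_comm (hf₁ i)]

theorem neg_lineLaplacian_lineDeriv_of_semilinear [Fintype ι] [IsRCLikeNormedField 𝕜] {c : 𝕜}
    {φ φ' : 𝕜 → 𝕜} {u : E → 𝕜} (hφ : HasDerivAt φ (φ' (u x)) (u x)) (hu : ContDiffAt 𝕜 3 u x)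
    (hueq : ∀ᶠ y in 𝓝 x, -lineLaplacian 𝕜 e u y = c * φ (u y)) (w : E) :
    -lineLaplacian 𝕜 e (fun y ↦ lineDeriv 𝕜 u y w) x = c * φ' (u x) * lineDeriv 𝕜 u x w := by
  have hlap : lineLaplacian 𝕜 e u =ᶠ[𝓝 x] fun y ↦ -c * φ (u y) := by
    filter_upwards [hueq] with y hy
    rw [neg_mul, ← hy, neg_neg]
  rw [lineLaplacian_lineDeriv e hu, hlap.lineDeriv_eq,
    lineDeriv_const_mul_comp hφ (hu.differentiableAt three_ne_zero)]
  ring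

theorem sum_greenFlux_mul [Fintype ι] (ν : E → ι → 𝕜) (v w : E → 𝕜) (x : E) :
    ∑ i, greenFlux 𝕜 e v w i x * ν x i =
      fieldDeriv 𝕜 e ν v x * w x - v x * fieldDeriv 𝕜 e ν w x := by
  simp only [greenFlux, fieldDeriv, Finset.sum_mul, Finset.mul_sum, ← Finset.sum_sub_distrib]
  exact Finset.sum_congr rfl fun i _ ↦ by ring

variable {v w : E → 𝕜}

theorem contDiffAt_greenFlux (hv : ContDiffAt 𝕜 2 v x) (hw : ContDiffAt 𝕜 2 w x) (i : ι) :
    ContDiffAt 𝕜 1 (greenFlux 𝕜 e v w i) x :=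
  ((contDiffAt_lineDeriv hv (by norm_num) (e i)).mul (hw.of_le one_le_two)).sub
    ((hv.of_le one_le_two).mul (contDiffAt_lineDeriv hw (by norm_num) (e i)))

theorem lineDeriv_greenFlux (hv : ContDiffAt 𝕜 2 v x) (hw : ContDiffAt 𝕜 2 w x) (i : ι) :
    lineDeriv 𝕜 (greenFlux 𝕜 e v w i) x (e i) =
      lineDeriv 𝕜 (fun y ↦ lineDeriv 𝕜 v y (e i)) x (e i) * w x -
        v x * lineDeriv 𝕜 (fun y ↦ lineDeriv 𝕜 w y (e i)) x (e i) := by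
  have hv₀ := hv.differentiableAt two_ne_zero
  have hw₀ := hw.differentiableAt two_ne_zero
  have hv₁ := (contDiffAt_lineDeriv (m := 1) hv (by norm_num) (e i)).differentiableAt one_ne_zero
  have hw₁ := (contDiffAt_lineDeriv (m := 1) hw (by norm_num) (e i)).differentiableAt one_ne_zero
  have hflux := ((hv₁.hasFDerivAt.mul hw₀.hasFDerivAt).sub
    (hv₀.hasFDerivAt.mul hw₁.hasFDerivAt)).hasLineDerivAt (e i)
  refine hflux.lineDeriv.trans ?_
  simp only [sub_apply, add_apply, smul_apply, smul_eq_mul,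
    hv₀.lineDeriv_eq_fderiv, hw₀.lineDeriv_eq_fderiv, hv₁.lineDeriv_eq_fderiv,
    hw₁.lineDeriv_eq_fderiv]
  ring

theorem sum_lineDeriv_greenFlux [Fintype ι] (hv : ContDiffAt 𝕜 2 v x) (hw : ContDiffAt 𝕜 2 w x) :
    ∑ i, lineDeriv 𝕜 (greenFlux 𝕜 e v w i) x (e i) =
      lineLaplacian 𝕜 e v x * w x - v x * lineLaplacian 𝕜 e w x := by
  simp only [lineDeriv_greenFlux e hv hw, Finset.sum_sub_distrib, ← Finset.sum_mul,
    ← Finset.mul_sum, lineLaplacian]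

end Laplacian

section GreenIdentity

variable {E : Type*} [NormedAddCommGroup E] [NormedSpace ℝ E] [MeasurableSpace E]
  {ι : Type*} [Fintype ι] {e : ι → E} {Ω Ω' : Set E} {m σ : Measure E} {ν : E → ι → ℝ}

/-- The divergence theorem on `Ω'` for `C¹` fields on `Ω`: in the directions `e`, with volume
measure `m`, surface measure `σ` on the frontier and outward normal field `ν`. A field is given by
its components along `e`. -/
def DivergenceTheoremOn (e : ι → E) (Ω Ω' : Set E) (m σ : Measure E) (ν : E → ι → ℝ) : Prop :=
  ∀ G : ι → E → ℝ, (∀ i, ContDiffOn ℝ 1 (G i) Ω) →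
    ∫ x in Ω', ∑ i, lineDeriv ℝ (G i) x (e i) ∂m = ∫ x in frontier Ω', ∑ i, G i x * ν x i ∂σ

theorem DivergenceTheoremOn.green_second_identity (hdiv : DivergenceTheoremOn e Ω Ω' m σ ν)
    (hΩ : IsOpen Ω) (hΩ' : MeasurableSet Ω') (hsub : Ω' ⊆ Ω) {v w : E → ℝ}
    (hv : ContDiffOn ℝ 2 v Ω) (hw : ContDiffOn ℝ 2 w Ω) :
    ∫ x in Ω', (lineLaplacian ℝ e v x * w x - v x * lineLaplacian ℝ e w x) ∂m =
      ∫ x in frontier Ω', (fieldDeriv ℝ e ν v x * w x - v x * fieldDeriv ℝ e ν w x) ∂σ := by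
  have hv' : ∀ x ∈ Ω, ContDiffAt ℝ 2 v x := fun x hx ↦ hv.contDiffAt (hΩ.mem_nhds hx)
  have hw' : ∀ x ∈ Ω, ContDiffAt ℝ 2 w x := fun x hx ↦ hw.contDiffAt (hΩ.mem_nhds hx)
  calc ∫ x in Ω', (lineLaplacian ℝ e v x * w x - v x * lineLaplacian ℝ e w x) ∂m
    _ = ∫ x in Ω', ∑ i, lineDeriv ℝ (greenFlux ℝ e v w i) x (e i) ∂m :=
      setIntegral_congr_fun hΩ' fun x hx ↦
        (sum_lineDeriv_greenFlux e (hv' x (hsub hx)) (hw' x (hsub hx))).symm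
    _ = ∫ x in frontier Ω', ∑ i, greenFlux ℝ e v w i x * ν x i ∂σ :=
      hdiv _ fun i x hx ↦ (contDiffAt_greenFlux e (hv' x hx) (hw' x hx) i).contDiffWithinAt
    _ = ∫ x in frontier Ω', (fieldDeriv ℝ e ν v x * w x - v x * fieldDeriv ℝ e ν w x) ∂σ := by
      simp only [sum_greenFlux_mul e ν]

theorem stmt10_general (hdiv : DivergenceTheoremOn e Ω Ω' m σ ν)
    (hΩ : IsOpen Ω) (hΩ' : MeasurableSet Ω') (hsub : Ω' ⊆ Ω) {c μ : ℝ} {φ φ' : ℝ → ℝ}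
    {u v : E → ℝ} (hφ : ∀ x ∈ Ω, HasDerivAt φ (φ' (u x)) (u x))
    (hu : ContDiffOn ℝ 3 u Ω) (hv : ContDiffOn ℝ 2 v Ω)
    (hueq : ∀ x ∈ Ω, -lineLaplacian ℝ e u x = c * φ (u x))
    (hveq : ∀ x ∈ Ω, -lineLaplacian ℝ e v x = μ * c * φ' (u x) * v x) (w : E) :
    (1 - μ) * c * ∫ x in Ω', φ' (u x) * lineDeriv ℝ u x w * v x ∂m =
      ∫ x in frontier Ω', (fieldDeriv ℝ e ν v x * lineDeriv ℝ u x w -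
        v x * fieldDeriv ℝ e ν (fun y ↦ lineDeriv ℝ u y w) x) ∂σ := by
  have huAt {x : E} (hx : x ∈ Ω) : ContDiffAt ℝ 3 u x := hu.contDiffAt (hΩ.mem_nhds hx)
  have hw : ContDiffOn ℝ 2 (fun x ↦ lineDeriv ℝ u x w) Ω :=
    fun x hx ↦ (contDiffAt_lineDeriv (huAt hx) (by norm_num) w).contDiffWithinAt
  rw [← hdiv.green_second_identity hΩ hΩ' hsub hv hw, ← integral_const_mul]
  refine setIntegral_congr_fun hΩ' fun x hx ↦ ?_
  have hlapw := neg_lineLaplacian_lineDeriv_of_semilinear e (hφ x (hsub hx)) (huAt (hsub hx))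
    (eventually_of_mem (hΩ.mem_nhds (hsub hx)) hueq) w
  linear_combination lineDeriv ℝ u x w * hveq x (hsub hx) - v x * hlapw

end GreenIdentity

section Plane

/-- The coordinate vectors of `ℝ × ℝ`, the directions in which `pd`, `lap` and `nder`
differentiate. -/
def coordVec : Fin 2 → ℝ × ℝ := ![(1, 0), (0, 1)]

theorem lineDeriv_coordVec (j : Fin 2) (f : ℝ × ℝ → ℝ) (p : ℝ × ℝ) :
    lineDeriv ℝ f p (coordVec j) = pd j f p := by
  obtain ⟨a, b⟩ := p
  fin_cases j
  · simp [pd, lineDeriv, coordVec, deriv_comp_const_add (fun s ↦ f (s, b))]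
  · simp [pd, lineDeriv, coordVec, deriv_comp_const_add (fun s ↦ f (a, s))]

theorem lineLaplacian_coordVec (f : ℝ × ℝ → ℝ) (p : ℝ × ℝ) :
    lineLaplacian ℝ coordVec f p = lap f p := by
  simp only [lineLaplacian, Fin.sum_univ_two, lineDeriv_coordVec]
  rfl

theorem fieldDeriv_coordVec (ν : ℝ × ℝ → ℝ × ℝ) (f : ℝ × ℝ → ℝ) (x : ℝ × ℝ) :
    fieldDeriv ℝ coordVec (fun x ↦ ![(ν x).1, (ν x).2]) f x = nder ν f x := by
  simp [nder, fieldDeriv, lineDeriv_coordVec]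

theorem divergenceTheoremOn_coordVec {Ω Ω' : Set (ℝ × ℝ)} {m σ : Measure (ℝ × ℝ)}
    {ν : ℝ × ℝ → ℝ × ℝ}
    (hdiv : ∀ F : ℝ × ℝ → ℝ × ℝ, ContDiffOn ℝ 1 F Ω →
      ∫ x in Ω', (deriv (fun s ↦ (F (s, x.2)).1) x.1 + deriv (fun s ↦ (F (x.1, s)).2) x.2) ∂m =
        ∫ x in frontier Ω', ((F x).1 * (ν x).1 + (F x).2 * (ν x).2) ∂σ) :
    DivergenceTheoremOn coordVec Ω Ω' m σ fun x ↦ ![(ν x).1, (ν x).2] := by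
  intro G hG
  simp only [Fin.sum_univ_two, lineDeriv_coordVec]
  exact hdiv (fun x ↦ (G 0 x, G 1 x)) ((hG 0).prodMk (hG 1))

end Plane

theorem hasDerivAt_exp_sub_exp_neg (t : ℝ) :
    HasDerivAt (fun s ↦ exp s - exp (-s)) (exp t + exp (-t)) t := by
  simpa using (hasDerivAt_exp t).fun_sub (hasDerivAt_neg t).exp

/-- Integral identity for the linearized sinh-Poisson equation.  The subdomain Ω′ has
closure contained in Ω; its boundary data (surface measure σ on the frontier and outward
unit normal ν) are abstracted through the validity of the divergence theorem on Ω′. -/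
theorem stmt10 (Ω Ω' : Set (ℝ × ℝ)) (hΩ : IsOpen Ω) (hΩb : Bornology.IsBounded Ω)
    (ρ μ : ℝ) (hρ : 0 < ρ)
    (u v : ℝ × ℝ → ℝ) (hu : ContDiffOn ℝ 3 u Ω) (hv : ContDiffOn ℝ 2 v Ω)
    (hueq : ∀ x ∈ Ω, -lap u x = ρ^2 * (Real.exp (u x) - Real.exp (-u x)))
    (hveq : ∀ x ∈ Ω, -lap v x = μ * ρ^2 * (Real.exp (u x) + Real.exp (-u x)) * v x)
    (hΩ' : IsOpen Ω') (hsub : closure Ω' ⊆ Ω)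
    (σ : Measure (ℝ × ℝ)) (ν : ℝ × ℝ → ℝ × ℝ)
    (hν : ∀ x ∈ frontier Ω', (ν x).1^2 + (ν x).2^2 = 1)
    (hdiv : ∀ F : ℝ × ℝ → ℝ × ℝ, ContDiffOn ℝ 1 F Ω →
      (∫ x in Ω', (deriv (fun s => (F (s, x.2)).1) x.1 +
                   deriv (fun s => (F (x.1, s)).2) x.2))
        = ∫ x in frontier Ω', ((F x).1 * (ν x).1 + (F x).2 * (ν x).2) ∂σ)
    (j : Fin 2) :
    (1 - μ) * ρ^2 *
        (∫ x in Ω', (Real.exp (u x) + Real.exp (-u x)) * pd j u x * v x)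
      = ∫ x in frontier Ω',
          (nder ν v x * pd j u x - v x * nder ν (pd j u) x) ∂σ := by
  simp only [← lineLaplacian_coordVec] at hueq hveq
  simpa only [lineDeriv_coordVec, fieldDeriv_coordVec] using
    stmt10_general (φ' := fun t ↦ exp t + exp (-t)) (divergenceTheoremOn_coordVec hdiv) hΩ
      hΩ'.measurableSet (subset_closure.trans hsub)
      (fun x _ ↦ hasDerivAt_exp_sub_exp_neg (u x)) hu hv hueq hveq (coordVec j)
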